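/- arXiv:0905.2746 — 2 statements merged into one kernel-verified Lean document; each statement's English description precedes it below -/
import Mathlib

section
/- Let m ≥ 4 and b_1, b_2, t ∈ K with t b_2 ≠ 0. Then dim_K soc(Λ̃) ≥ 2m, and Λ̃/soc(Λ̃) is not isomorphic to Λ/soc(Λ) as a K-algebra; that is, Λ̃ is not a socle deformation of Λ. -/
open scoped BigOperators

noncomputable section

/-- Generators of the path algebra: trivial paths `e i`, arrows `a i : i → i+1`
and `abar i : i+1 → i`. -/
inductive Gen (m : ℕ) : Type
  | e : ZMod m → Gen m
  | a : ZMod m → Gen m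
  | abar : ZMod m → Gen m

/-- The free associative algebra on the generators. -/
abbrev FA (K : Type) [Field K] (m : ℕ) : Type := FreeAlgebra K (Gen m)

def Ee (K : Type) [Field K] (m : ℕ) (i : ZMod m) : FA K m := FreeAlgebra.ι K (Gen.e i)
def Aa (K : Type) [Field K] (m : ℕ) (i : ZMod m) : FA K m := FreeAlgebra.ι K (Gen.a i)
def Bb (K : Type) [Field K] (m : ℕ) (i : ZMod m) : FA K m := FreeAlgebra.ι K (Gen.abar i)

/-- The defining relations of the path algebra KQ. -/
inductive PathRel (K : Type) [Field K] (m : ℕ) [NeZero m] : FA K m → FA K m → Prop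
  | orth : ∀ i j : ZMod m, i ≠ j → PathRel K m (Ee K m i * Ee K m j) 0
  | idem : ∀ i : ZMod m, PathRel K m (Ee K m i * Ee K m i) (Ee K m i)
  | total : PathRel K m (∑ i : ZMod m, Ee K m i) 1
  | asrc : ∀ i : ZMod m, PathRel K m (Ee K m i * Aa K m i) (Aa K m i)
  | atgt : ∀ i : ZMod m, PathRel K m (Aa K m i * Ee K m (i + 1)) (Aa K m i)
  | bsrc : ∀ i : ZMod m, PathRel K m (Ee K m (i + 1) * Bb K m i) (Bb K m i)
  | btgt : ∀ i : ZMod m, PathRel K m (Bb K m i * Ee K m i) (Bb K m i)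

/-- The path algebra KQ. -/
abbrev PathAlg (K : Type) [Field K] (m : ℕ) [NeZero m] : Type := RingQuot (PathRel K m)

def pe (K : Type) [Field K] (m : ℕ) [NeZero m] (i : ZMod m) : PathAlg K m :=
  RingQuot.mkAlgHom K (PathRel K m) (Ee K m i)
def pa (K : Type) [Field K] (m : ℕ) [NeZero m] (i : ZMod m) : PathAlg K m :=
  RingQuot.mkAlgHom K (PathRel K m) (Aa K m i)
def pb (K : Type) [Field K] (m : ℕ) [NeZero m] (i : ZMod m) : PathAlg K m :=
  RingQuot.mkAlgHom K (PathRel K m) (Bb K m i)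

/-- The relations defining `Λ_q`: `a_i a_{i+1} = 0`, `ā_{i-1} ā_{i-2} = 0` and
`q_i a_i ā_i - ā_{i-1} a_{i-1} = 0`. -/
inductive LamRel (K : Type) [Field K] (m : ℕ) [NeZero m] (q : ZMod m → K) :
    PathAlg K m → PathAlg K m → Prop
  | row : ∀ i : ZMod m, LamRel K m q (pa K m i * pa K m (i + 1)) 0
  | col : ∀ i : ZMod m, LamRel K m q (pb K m (i - 1) * pb K m (i - 2)) 0
  | comm : ∀ i : ZMod m,
      LamRel K m q (q i • (pa K m i * pb K m i) - pb K m (i - 1) * pa K m (i - 1)) 0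

/-- The algebra `Λ_q`. -/
abbrev Lam (K : Type) [Field K] (m : ℕ) [NeZero m] (q : ZMod m → K) : Type :=
  RingQuot (LamRel K m q)

def lamE (K : Type) [Field K] (m : ℕ) [NeZero m] (q : ZMod m → K) (i : ZMod m) :
    Lam K m q := RingQuot.mkAlgHom K (LamRel K m q) (pe K m i)
def lamA (K : Type) [Field K] (m : ℕ) [NeZero m] (q : ZMod m → K) (i : ZMod m) :
    Lam K m q := RingQuot.mkAlgHom K (LamRel K m q) (pa K m i)
def lamB (K : Type) [Field K] (m : ℕ) [NeZero m] (q : ZMod m → K) (i : ZMod m) :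
    Lam K m q := RingQuot.mkAlgHom K (LamRel K m q) (pb K m i)

/-- The socle of a ring `R` as a left module over itself: the sum of all its simple
(= atomic) left submodules. -/
def socAlg (R : Type) [Ring R] : Submodule R R := sSup {S : Submodule R R | IsAtom S}

/-- The quotient of a `K`-algebra `R` by (the two-sided ideal generated by) its left socle. -/
abbrev socQuot (K : Type) [Field K] (R : Type) [Ring R] [Algebra K R] : Type :=
  RingQuot (fun x y : R => x - y ∈ socAlg R)

/-- The relations defining the deformed algebra `Λ̃` associated with scalars `b₁, b₂, t`. -/
inductive TildeRel (K : Type) [Field K] (m : ℕ) [NeZero m] (b1 b2 t : K) :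
    PathAlg K m → PathAlg K m → Prop
  | row : ∀ i : ZMod m, TildeRel K m b1 b2 t (pa K m i * pa K m (i + 1)) 0
  | col : ∀ i : ZMod m, TildeRel K m b1 b2 t (pb K m (i - 1) * pb K m (i - 2)) 0
  | comm : ∀ j : ZMod m, j ≠ 0 →
      TildeRel K m b1 b2 t
        (pa K m j * pb K m j - pb K m (j - 1) * pa K m (j - 1)
          - (t * (-1 : K) ^ (j.val) * b2) • pe K m j) 0
  | comm0 : TildeRel K m b1 b2 t
        ((1 - t * b1) • (pa K m 0 * pb K m 0) - pb K m (-1) * pa K m (-1)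
          - (t * b2) • pe K m 0) 0

/-- The deformed algebra `Λ̃`. -/
abbrev Tilde (K : Type) [Field K] (m : ℕ) [NeZero m] (b1 b2 t : K) : Type :=
  RingQuot (TildeRel K m b1 b2 t)

def tE (K : Type) [Field K] (m : ℕ) [NeZero m] (b1 b2 t : K) (i : ZMod m) :
    Tilde K m b1 b2 t := RingQuot.mkAlgHom K (TildeRel K m b1 b2 t) (pe K m i)
def tA (K : Type) [Field K] (m : ℕ) [NeZero m] (b1 b2 t : K) (i : ZMod m) :
    Tilde K m b1 b2 t := RingQuot.mkAlgHom K (TildeRel K m b1 b2 t) (pa K m i)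
def tB (K : Type) [Field K] (m : ℕ) [NeZero m] (b1 b2 t : K) (i : ZMod m) :
    Tilde K m b1 b2 t := RingQuot.mkAlgHom K (TildeRel K m b1 b2 t) (pb K m i)


/-!
If `t b₂ ≠ 0`, the relation at the vertex `j + 1`, multiplied on the left by `a_j`, becomes
`a_j ā_j a_j = -c_{j+1} a_j` with `c_{j+1} ≠ 0`. So the left ideal of `Λ̃` generated by `a_j` is
spanned by `a_j` and `ā_j a_j` and is simple or zero, and the relation at `j` expresses `e_j`
through elements of such ideals and of their right translates: `Λ̃` is its own socle, and
`Λ̃/soc(Λ̃) = 0`. On the other hand `Λ_q/soc(Λ_q) ≠ 0`, since `Λ_q` acts by upper triangular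
`2 × 2` matrices with `a_0` acting as a nonzero strictly upper triangular one. Finally `Λ̃` maps
onto a product of copies of `M₂(K)`, one for each of the edges that avoid the vertex `0`.
-/

section Socle

variable {R : Type} [Ring R]

theorem mul_mem_socAlg_of_forall_exists_mul_eq {a : R}
    (h : ∀ r, r * a ≠ 0 → ∃ s, s * (r * a) = a) (x : R) : a * x ∈ socAlg R := by
  by_cases hax : a * x = 0
  · exact hax ▸ Submodule.zero_mem _
  refine le_sSup (a := Submodule.span R {a * x}) ?_ (Submodule.mem_span_singleton_self _)
  refine isAtom_iff_le_of_ge.2 ⟨mt Submodule.span_singleton_eq_bot.1 hax, fun S hS hle => ?_⟩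
  obtain ⟨z, hzS, hz⟩ := Submodule.exists_mem_ne_zero_of_ne_bot hS
  obtain ⟨r, rfl⟩ := Submodule.mem_span_singleton.1 (hle hzS)
  obtain ⟨s, hs⟩ : ∃ s, s * (r * a) = a :=
    h r fun hra => hz (by rw [smul_eq_mul, ← mul_assoc, hra, zero_mul])
  have hsz : s • r • (a * x) = a * x := by
    simp only [smul_eq_mul]
    rw [← mul_assoc r, ← mul_assoc, hs]
  rw [Submodule.span_singleton_le_iff_mem, ← hsz]
  exact S.smul_mem s hzS

theorem exists_mul_mul_eq_of_mul_mem_span_pair {K : Type*} [Field K] [Algebra K R] {a b : R}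
    {d : K} (hd : d ≠ 0) (haa : a * a = 0) (haba : a * (b * a) = d • a) {r : R}
    (hr : r * a ∈ Submodule.span K {a, b * a}) (hra : r * a ≠ 0) :
    ∃ s, s * (r * a) = a := by
  obtain ⟨α, β, hαβ⟩ := Submodule.mem_span_pair.1 hr
  rw [← hαβ] at hra ⊢
  by_cases hβ : β = 0
  · have hα : α ≠ 0 := by
      rintro rfl
      simp [hβ] at hra
    exact ⟨α⁻¹ • 1, by simp [hβ, hα]⟩
  · exact ⟨(β * d)⁻¹ • a, by simp [mul_add, haa, haba, smul_smul, hβ, hd, mul_comm]⟩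

theorem socAlg_le_ker_of_forall_mul_ne_zero {F : Type*} [Ring F] (ε : R →+* F) {a : R}
    (ha : ε a = 0) (h : ∀ s, ε s ≠ 0 → a * s ≠ 0) : socAlg R ≤ RingHom.ker ε := by
  refine sSup_le fun S hS s hs => ?_
  by_contra hεs
  have hspan : Submodule.span R {a * s} = S :=
    (hS.le_iff_eq (mt Submodule.span_singleton_eq_bot.1 (h s hεs))).1
      ((Submodule.span_singleton_le_iff_mem _ _).2 (S.smul_mem a hs))
  obtain ⟨r, hr⟩ := Submodule.mem_span_singleton.1 (hspan ▸ hs)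
  exact hεs (RingHom.mem_ker.2 (by rw [← hr]; simp [ha]))

variable {K : Type} [Field K] [Algebra K R]

theorem subsingleton_socQuot_of_socAlg_eq_top (h : socAlg R = ⊤) :
    Subsingleton (socQuot K R) := by
  refine subsingleton_of_zero_eq_one ?_
  have h01 := RingQuot.mkAlgHom_rel K (s := fun x y : R => x - y ∈ socAlg R) (x := 0) (y := 1)
    (h ▸ Submodule.mem_top)
  rwa [map_zero, map_one] at h01

theorem nontrivial_socQuot_of_socAlg_le_ker {F : Type*} [Ring F] [Algebra K F] [Nontrivial F]
    (ε : R →ₐ[K] F) (h : socAlg R ≤ RingHom.ker (ε : R →+* F)) : Nontrivial (socQuot K R) :=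
  (RingQuot.liftAlgHom K ⟨ε, fun _ _ hxy => (RingHom.sub_mem_ker_iff _).1 (h hxy)⟩ :
    socQuot K R →ₐ[K] F).toRingHom.domain_nontrivial

/-- The lower right entry of a representation by upper triangular `2 × 2` matrices, which is a
one-dimensional representation. -/
def lowerRightEntry (φ : R →ₐ[K] Matrix (Fin 2) (Fin 2) K) (hφ : ∀ x, φ x 1 0 = 0) : R →ₐ[K] K :=
  AlgHom.ofLinearMap (Matrix.entryLinearMap K K 1 1 ∘ₗ φ.toLinearMap) (by simp)
    fun x y => by simp [Matrix.mul_apply, hφ]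

theorem nontrivial_socQuot_of_upperTriangular (φ : R →ₐ[K] Matrix (Fin 2) (Fin 2) K)
    (hφ : ∀ x, φ x 1 0 = 0) {a : R} (ha : φ a = .single 0 1 1) : Nontrivial (socQuot K R) := by
  refine nontrivial_socQuot_of_socAlg_le_ker (lowerRightEntry φ hφ)
    (socAlg_le_ker_of_forall_mul_ne_zero _ (a := a) ?_ fun s hs has => hs ?_)
  · simp [lowerRightEntry, ha]
  · have h01 : φ (a * s) 0 1 = 0 := by simp [has]
    simpa [ha, Matrix.mul_apply, lowerRightEntry] using h01

end Socle

section PathAlgebra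

variable {K : Type} [Field K] {m : ℕ} [NeZero m]

theorem pe_mul_pe_of_ne {i j : ZMod m} (h : i ≠ j) : pe K m i * pe K m j = 0 := by
  simpa [pe] using RingQuot.mkAlgHom_rel K (PathRel.orth (K := K) i j h)

theorem sum_pe : ∑ i : ZMod m, pe K m i = 1 := by
  simpa [pe] using RingQuot.mkAlgHom_rel K (PathRel.total (K := K) (m := m))

theorem pe_mul_pa (i : ZMod m) : pe K m i * pa K m i = pa K m i := by
  simpa [pe, pa] using RingQuot.mkAlgHom_rel K (PathRel.asrc (K := K) i)

theorem pa_mul_pe (i : ZMod m) : pa K m i * pe K m (i + 1) = pa K m i := by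
  simpa [pe, pa] using RingQuot.mkAlgHom_rel K (PathRel.atgt (K := K) i)

theorem pe_mul_pb (i : ZMod m) : pe K m (i + 1) * pb K m i = pb K m i := by
  simpa [pe, pb] using RingQuot.mkAlgHom_rel K (PathRel.bsrc (K := K) i)

theorem pb_mul_pe (i : ZMod m) : pb K m i * pe K m i = pb K m i := by
  simpa [pe, pb] using RingQuot.mkAlgHom_rel K (PathRel.btgt (K := K) i)

theorem pe_mul_pa_of_ne {i j : ZMod m} (h : i ≠ j) : pe K m i * pa K m j = 0 := by
  rw [← pe_mul_pa j, ← mul_assoc, pe_mul_pe_of_ne h, zero_mul]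

theorem pe_mul_pb_of_ne {i j : ZMod m} (h : i ≠ j + 1) : pe K m i * pb K m j = 0 := by
  rw [← pe_mul_pb j, ← mul_assoc, pe_mul_pe_of_ne h, zero_mul]

theorem pa_mul_pa_of_ne {i j : ZMod m} (h : i + 1 ≠ j) : pa K m i * pa K m j = 0 := by
  rw [← pa_mul_pe i, mul_assoc, pe_mul_pa_of_ne h, mul_zero]

theorem pb_mul_pb_of_ne {i j : ZMod m} (h : i ≠ j + 1) : pb K m i * pb K m j = 0 := by
  rw [← pb_mul_pe i, mul_assoc, pe_mul_pb_of_ne h, mul_zero]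

theorem pa_mul_pb_of_ne {i j : ZMod m} (h : i ≠ j) : pa K m i * pb K m j = 0 := by
  rw [← pa_mul_pe i, mul_assoc, pe_mul_pb_of_ne (mt add_right_cancel h), mul_zero]

theorem pb_mul_pa_of_ne {i j : ZMod m} (h : i ≠ j) : pb K m i * pa K m j = 0 := by
  rw [← pb_mul_pe i, mul_assoc, pe_mul_pa_of_ne h, mul_zero]

variable {R : Type*} [Ring R] [Algebra K R]

theorem map_mul_mem_of_generators (f : PathAlg K m →ₐ[K] R) (W : Submodule K R)
    (he : ∀ i, ∀ w ∈ W, f (pe K m i) * w ∈ W) (ha : ∀ i, ∀ w ∈ W, f (pa K m i) * w ∈ W)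
    (hb : ∀ i, ∀ w ∈ W, f (pb K m i) * w ∈ W) (p : PathAlg K m) :
    ∀ w ∈ W, f p * w ∈ W := by
  obtain ⟨x, rfl⟩ := RingQuot.mkAlgHom_surjective K (PathRel K m) p
  induction x using FreeAlgebra.induction with
  | grade0 c =>
    intro w hw
    rw [AlgHom.commutes, AlgHom.commutes, ← Algebra.smul_def]
    exact W.smul_mem c hw
  | grade1 g =>
    cases g with
    | e i => exact he i
    | a i => exact ha i
    | abar i => exact hb i
  | mul x y hx hy =>
    intro w hw
    rw [map_mul, map_mul, mul_assoc]
    exact hx _ (hy w hw)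
  | add x y hx hy =>
    intro w hw
    rw [map_add, map_add, add_mul]
    exact W.add_mem (hx w hw) (hy w hw)

end PathAlgebra

/-- The relations `a_i a_{i+1} = 0`, `ā_{i+1} ā_i = 0` and
`u_{i+1} a_{i+1} ā_{i+1} = ā_i a_i + c_{i+1} e_{i+1}` for the images of the arrows under an algebra
homomorphism `f` out of the path algebra. They define `Λ_q` for `u = q`, `c = 0`, and `Λ̃` for
`u = tildeWeight`, `c = tildeScalar` below. -/
structure DeformedRelations {K : Type} [Field K] {m : ℕ} [NeZero m] {R : Type*} [Ring R]
    [Algebra K R] (f : PathAlg K m →ₐ[K] R) (u c : ZMod m → K) : Prop where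
  row : ∀ i, f (pa K m i * pa K m (i + 1)) = 0
  col : ∀ i, f (pb K m (i + 1) * pb K m i) = 0
  comm : ∀ i, u (i + 1) • f (pa K m (i + 1) * pb K m (i + 1)) =
    f (pb K m i * pa K m i) + c (i + 1) • f (pe K m (i + 1))

namespace DeformedRelations

variable {K : Type} [Field K] {m : ℕ} [NeZero m] {u c : ZMod m → K}

section General

variable {R : Type*} [Ring R] [Algebra K R] {f : PathAlg K m →ₐ[K] R}

theorem map_pa_mul_pa (hf : DeformedRelations f u c) (i j : ZMod m) :
    f (pa K m i * pa K m j) = 0 := by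
  by_cases hij : i + 1 = j
  · exact hij ▸ hf.row i
  · rw [pa_mul_pa_of_ne hij, map_zero]

theorem map_pb_mul_pb (hf : DeformedRelations f u c) (i j : ZMod m) :
    f (pb K m i * pb K m j) = 0 := by
  by_cases hij : i = j + 1
  · exact hij ▸ hf.col j
  · rw [pb_mul_pb_of_ne hij, map_zero]

theorem map_pa_mul_pb_mul_pa (hf : DeformedRelations f u c) (j : ZMod m) :
    f (pa K m j * (pb K m j * pa K m j)) = -c (j + 1) • f (pa K m j) := by
  have hcomm := congrArg (f (pa K m j) * ·) (hf.comm j)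
  simp only [mul_smul_comm, mul_add, ← map_mul, pa_mul_pe] at hcomm
  rw [← mul_assoc, map_mul, hf.row, zero_mul, smul_zero] at hcomm
  rw [neg_smul]
  exact eq_neg_of_add_eq_zero_left hcomm.symm

theorem map_mul_map_pa_mem_span_pair (hf : DeformedRelations f u c) (j : ZMod m)
    (p : PathAlg K m) :
    f p * f (pa K m j) ∈ Submodule.span K {f (pa K m j), f (pb K m j) * f (pa K m j)} := by
  set W := Submodule.span K {f (pa K m j), f (pb K m j) * f (pa K m j)} with hW
  have haW : f (pa K m j) ∈ W := Submodule.subset_span (by simp)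
  have hbaW : f (pb K m j * pa K m j) ∈ W := Submodule.subset_span (by simp)
  have mul_mem : ∀ g : PathAlg K m, f (g * pa K m j) ∈ W → f (g * (pb K m j * pa K m j)) ∈ W →
      ∀ w ∈ W, f g * w ∈ W := by
    intro g hga hgba
    change W ≤ W.comap (LinearMap.mulLeft K (f g))
    rw [hW, Submodule.span_le, ← hW]
    rintro _ (rfl | rfl)
    · simpa using hga
    · simpa using hgba
  refine map_mul_mem_of_generators f W (fun i => mul_mem _ ?_ ?_) (fun i => mul_mem _ ?_ ?_)
    (fun i => mul_mem _ ?_ ?_) p _ haW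
  · by_cases hij : i = j
    · rwa [hij, pe_mul_pa]
    · simp [pe_mul_pa_of_ne hij]
  · by_cases hij : i = j + 1
    · rwa [← mul_assoc, hij, pe_mul_pb]
    · simp [← mul_assoc, pe_mul_pb_of_ne hij]
  · simp [hf.map_pa_mul_pa i j]
  · by_cases hij : i = j
    · rw [hij, hf.map_pa_mul_pb_mul_pa]
      exact W.smul_mem _ haW
    · simp [← mul_assoc, pa_mul_pb_of_ne hij]
  · by_cases hij : i = j
    · rwa [hij]
    · simp [pb_mul_pa_of_ne hij]
  · simp [← mul_assoc, hf.map_pb_mul_pb i j]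

theorem pi {ι : Type*} {R : ι → Type*} [∀ k, Ring (R k)] [∀ k, Algebra K (R k)]
    {f : ∀ k, PathAlg K m →ₐ[K] R k} (hf : ∀ k, DeformedRelations (f k) u c) :
    DeformedRelations (AlgHom.pi f) u c where
  row i := funext fun k => (hf k).row i
  col i := funext fun k => (hf k).col i
  comm i := funext fun k => (hf k).comm i

end General

section Socle

variable {R : Type} [Ring R] [Algebra K R] {f : PathAlg K m →ₐ[K] R}

theorem map_pa_mul_mem_socAlg (hf : DeformedRelations f u c) (hsurj : Function.Surjective f)
    {j : ZMod m} (hc : c (j + 1) ≠ 0) (x : R) : f (pa K m j) * x ∈ socAlg R := by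
  refine mul_mem_socAlg_of_forall_exists_mul_eq (fun r => ?_) x
  obtain ⟨p, rfl⟩ := hsurj r
  refine exists_mul_mul_eq_of_mul_mem_span_pair (neg_ne_zero.2 hc) ?_ ?_
    (hf.map_mul_map_pa_mem_span_pair j p)
  · rw [← map_mul, hf.map_pa_mul_pa]
  · rw [← map_mul, ← map_mul, hf.map_pa_mul_pb_mul_pa]

theorem socAlg_eq_top (hf : DeformedRelations f u c) (hsurj : Function.Surjective f)
    (hc : ∀ j, c j ≠ 0) : socAlg R = ⊤ := by
  have hpa : ∀ j x, f (pa K m j) * x ∈ socAlg R :=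
    fun j => hf.map_pa_mul_mem_socAlg hsurj (hc (j + 1))
  have hpb_pa : ∀ j, f (pb K m j * pa K m j) ∈ socAlg R := fun j => by
    simpa using (socAlg R).smul_mem (f (pb K m j)) (hpa j 1)
  have hpe : ∀ j, f (pe K m (j + 1)) ∈ socAlg R := fun j => by
    have hsmul : c (j + 1) • f (pe K m (j + 1)) ∈ socAlg R := by
      rw [← sub_eq_of_eq_add' (hf.comm j), map_mul]
      exact sub_mem (Submodule.smul_of_tower_mem _ _ (hpa _ _)) (hpb_pa j)
    simpa [smul_smul, hc] using Submodule.smul_of_tower_mem _ (c (j + 1))⁻¹ hsmul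
  rw [Ideal.eq_top_iff_one, ← map_one f, ← sum_pe, map_sum]
  exact sum_mem fun j _ => by simpa using hpe (j - 1)

end Socle

end DeformedRelations

section EdgeRepresentation

variable {K : Type} [Field K] {m : ℕ} [NeZero m]

open Matrix in
/-- The matrices of the generators in `edgeRep`. -/
def edgeRepGen (k : ZMod m) (d : K) : Gen m → Matrix (Fin 2) (Fin 2) K
  | Gen.e i => single 0 0 (if i = k then 1 else 0) + single 1 1 (if i = k + 1 then 1 else 0)
  | Gen.a i => single 0 1 (if i = k then 1 else 0)
  | Gen.abar i => single 1 0 (if i = k then d else 0)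

theorem lift_edgeRepGen_eq_of_pathRel (k : ZMod m) (d : K) ⦃x y : FA K m⦄
    (h : PathRel K m x y) :
    FreeAlgebra.lift K (edgeRepGen k d) x = FreeAlgebra.lift K (edgeRepGen k d) y := by
  cases h with
  | total =>
    ext p q
    fin_cases p <;> fin_cases q <;> simp [Ee, edgeRepGen, Matrix.sum_apply]
  | orth i j hij =>
    have hne (l : ZMod m) : ¬(j = l ∧ i = l) := fun h => hij (h.2.trans h.1.symm)
    simp [Ee, edgeRepGen, add_mul, mul_add, ← ite_and, hne]
  | _ => simp [Ee, Aa, Bb, edgeRepGen, add_mul, mul_add, ← ite_and]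

/-- The two-dimensional representation of `KQ` supported on the edge joining `k` and `k + 1`, in
which `a_k` acts by `1` and `ā_k` by the scalar `d`. For `m = 1` the two ends of the edge are
still separate basis vectors. -/
def edgeRep (k : ZMod m) (d : K) : PathAlg K m →ₐ[K] Matrix (Fin 2) (Fin 2) K :=
  RingQuot.liftAlgHom K ⟨FreeAlgebra.lift K (edgeRepGen k d), lift_edgeRepGen_eq_of_pathRel k d⟩

theorem edgeRep_pe (k : ZMod m) (d : K) (i : ZMod m) : edgeRep k d (pe K m i) =
    .single 0 0 (if i = k then 1 else 0) + .single 1 1 (if i = k + 1 then 1 else 0) := by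
  simp [edgeRep, pe, Ee, edgeRepGen]

theorem edgeRep_pa (k : ZMod m) (d : K) (i : ZMod m) :
    edgeRep k d (pa K m i) = .single 0 1 (if i = k then 1 else 0) := by
  simp [edgeRep, pa, Aa, edgeRepGen]

theorem edgeRep_pb (k : ZMod m) (d : K) (i : ZMod m) :
    edgeRep k d (pb K m i) = .single 1 0 (if i = k then d else 0) := by
  simp [edgeRep, pb, Bb, edgeRepGen]

theorem deformedRelations_edgeRep {u c : ZMod m → K} {k : ZMod m} {d : K}
    (hk : u k * d = c k) (hk' : d = -c (k + 1)) : DeformedRelations (edgeRep k d) u c where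
  row i := by simp [edgeRep_pa]
  col i := by simp [edgeRep_pb]
  comm i := by
    ext p q
    fin_cases p <;> fin_cases q <;> simp [edgeRep_pa, edgeRep_pb, edgeRep_pe] <;> grind

theorem edgeRep_zero_apply_one_zero (k : ZMod m) (p : PathAlg K m) :
    edgeRep k (0 : K) p 1 0 = 0 := by
  have mul_mem (X : Matrix (Fin 2) (Fin 2) K) (hX : X 1 0 = 0) :
      ∀ Y ∈ LinearMap.ker (Matrix.entryLinearMap K K (1 : Fin 2) (0 : Fin 2)),
        X * Y ∈ LinearMap.ker (Matrix.entryLinearMap K K (1 : Fin 2) (0 : Fin 2)) := by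
    simp +contextual [Matrix.mul_apply, hX]
  simpa using map_mul_mem_of_generators (edgeRep k (0 : K)) _
    (fun i => mul_mem _ (by simp [edgeRep_pe])) (fun i => mul_mem _ (by simp [edgeRep_pa]))
    (fun i => mul_mem _ (by simp [edgeRep_pb])) p 1 (by simp)

/-- The product of the edge representations over a set of edges. -/
def edgeRepPi (s : Set (ZMod m)) (d : ZMod m → K) :
    PathAlg K m →ₐ[K] (s → Matrix (Fin 2) (Fin 2) K) :=
  AlgHom.pi fun k : s => edgeRep k.1 (d k)

variable {s : Set (ZMod m)}

theorem edgeRepPi_pa (d : ZMod m → K) (k : s) :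
    edgeRepPi s d (pa K m k) = Pi.single k (.single 0 1 1) := by
  ext1 l
  obtain rfl | hkl := eq_or_ne l k
  · simp [edgeRepPi, edgeRep_pa]
  · simp [edgeRepPi, edgeRep_pa, hkl, Subtype.coe_ne_coe.2 hkl.symm]

theorem edgeRepPi_pb (d : ZMod m → K) (k : s) :
    edgeRepPi s d (pb K m k) = Pi.single k (.single 1 0 (d k)) := by
  ext1 l
  obtain rfl | hkl := eq_or_ne l k
  · simp [edgeRepPi, edgeRep_pb]
  · simp [edgeRepPi, edgeRep_pb, hkl, Subtype.coe_ne_coe.2 hkl.symm]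

theorem single_single_mem_range_edgeRepPi {d : ZMod m → K} {k : s} (hd : d k ≠ 0)
    (i j : Fin 2) : Pi.single k (.single i j 1) ∈ (edgeRepPi s d).range := by
  have hpa : Pi.single k (.single 0 1 1) ∈ (edgeRepPi s d).range :=
    ⟨pa K m k, edgeRepPi_pa d k⟩
  have hpb : Pi.single k (.single 1 0 1) ∈ (edgeRepPi s d).range := by
    refine (AlgHom.mem_range _).2 ⟨(d k)⁻¹ • pb K m k, ?_⟩
    rw [map_smul, edgeRepPi_pb, ← Pi.single_smul, Matrix.smul_single, smul_eq_mul,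
      inv_mul_cancel₀ hd]
  fin_cases i <;> fin_cases j
  · simpa [← Pi.single_mul] using mul_mem hpa hpb
  · exact hpa
  · exact hpb
  · simpa [← Pi.single_mul] using mul_mem hpb hpa

theorem edgeRepPi_surjective {d : ZMod m → K} (hd : ∀ k ∈ s, d k ≠ 0) :
    Function.Surjective (edgeRepPi s d) := by
  classical
  intro X
  rw [← AlgHom.mem_range, ← Finset.univ_sum_single X]
  refine sum_mem fun k _ => ?_
  rw [Matrix.matrix_eq_sum_single (X k), ← LinearMap.single_apply K, map_sum]
  refine sum_mem fun i _ => ?_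
  rw [map_sum]
  refine sum_mem fun j _ => ?_
  rw [← mul_one (X k i j), ← smul_eq_mul, ← Matrix.smul_single, map_smul]
  exact Subalgebra.smul_mem _ (single_single_mem_range_edgeRepPi (hd k k.2) i j) _

end EdgeRepresentation

section Lam

variable {K : Type} [Field K] {m : ℕ} [NeZero m]

theorem lamRel_map_eq {R : Type*} [Ring R] [Algebra K R] {f : PathAlg K m →ₐ[K] R}
    {q : ZMod m → K} (hf : DeformedRelations f q 0) ⦃x y : PathAlg K m⦄
    (h : LamRel K m q x y) : f x = f y := by
  cases h with
  | row i => rw [hf.row, map_zero]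
  | col i => rw [hf.map_pb_mul_pb, map_zero]
  | comm i => simpa [sub_eq_zero] using hf.comm (i - 1)

theorem nontrivial_socQuot_lam (q : ZMod m → K) : Nontrivial (socQuot K (Lam K m q)) := by
  let φ : Lam K m q →ₐ[K] Matrix (Fin 2) (Fin 2) K :=
    RingQuot.liftAlgHom K
      ⟨edgeRep 0 0, lamRel_map_eq (deformedRelations_edgeRep (by simp) (by simp))⟩
  have hφ : ∀ p, φ (RingQuot.mkAlgHom K _ p) = edgeRep 0 0 p := by simp [φ]
  refine nontrivial_socQuot_of_upperTriangular φ (fun x => ?_) (a := lamA K m q 0) ?_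
  · obtain ⟨p, rfl⟩ := RingQuot.mkAlgHom_surjective K _ x
    rw [hφ, edgeRep_zero_apply_one_zero]
  · rw [lamA, hφ, edgeRep_pa, if_pos rfl]

end Lam

section Tilde

variable {K : Type} [Field K] {m : ℕ}

/-- The coefficient of `a_j ā_j` in the relation of `Λ̃` at the vertex `j`. -/
def tildeWeight (b1 t : K) (j : ZMod m) : K := if j = 0 then 1 - t * b1 else 1

/-- The coefficient of `e_j` in the relation of `Λ̃` at the vertex `j`. -/
def tildeScalar (b2 t : K) (j : ZMod m) : K := t * (-1) ^ j.val * b2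

theorem tildeScalar_ne_zero {b2 t : K} (h : t * b2 ≠ 0) (j : ZMod m) : tildeScalar b2 t j ≠ 0 := by
  simp [tildeScalar, left_ne_zero_of_mul h, right_ne_zero_of_mul h]

variable [NeZero m]

theorem tildeScalar_add_one (b2 t : K) {k : ZMod m} (hk : k + 1 ≠ 0) :
    tildeScalar b2 t (k + 1) = -tildeScalar b2 t k := by
  have hcast : ((k.val + 1 : ℕ) : ZMod m) = k + 1 := by simp
  have hlt : k.val + 1 < m := lt_of_le_of_ne k.val_lt fun (hkm : k.val + 1 = m) => by
    rw [hkm, ZMod.natCast_self] at hcast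
    exact hk hcast.symm
  rw [tildeScalar, tildeScalar, ← hcast, ZMod.val_cast_of_lt hlt, pow_succ]
  ring

variable (b1 b2 t : K)

theorem deformedRelations_tilde :
    DeformedRelations (R := Tilde K m b1 b2 t) (RingQuot.mkAlgHom K _) (tildeWeight b1 t)
      (tildeScalar b2 t) where
  row i := by simpa using RingQuot.mkAlgHom_rel K (TildeRel.row (b1 := b1) (b2 := b2) (t := t) i)
  col i := by
    have h := RingQuot.mkAlgHom_rel K (TildeRel.col (b1 := b1) (b2 := b2) (t := t) (i + 2))
    rwa [add_sub_cancel_right, map_zero, show i + 2 - 1 = i + 1 by ring] at h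
  comm i := by
    by_cases hi : i + 1 = 0
    · have h := RingQuot.mkAlgHom_rel K (TildeRel.comm0 (m := m) (b1 := b1) (b2 := b2) (t := t))
      rw [map_sub, map_sub, map_smul, map_smul, map_zero, sub_sub, sub_eq_zero] at h
      simpa [hi, tildeWeight, tildeScalar, eq_neg_of_add_eq_zero_left hi] using h
    · have h := RingQuot.mkAlgHom_rel K (TildeRel.comm (b1 := b1) (b2 := b2) (t := t) (i + 1) hi)
      rw [map_sub, map_sub, map_smul, map_zero, sub_sub, sub_eq_zero, add_sub_cancel_right] at h
      rwa [tildeWeight, if_neg hi, one_smul]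

variable {b1 b2 t}

theorem tildeRel_map_eq {R : Type*} [Ring R] [Algebra K R] {f : PathAlg K m →ₐ[K] R}
    (hf : DeformedRelations f (tildeWeight b1 t) (tildeScalar b2 t)) ⦃x y : PathAlg K m⦄
    (h : TildeRel K m b1 b2 t x y) : f x = f y := by
  cases h with
  | row i => rw [hf.row, map_zero]
  | col i => rw [hf.map_pb_mul_pb, map_zero]
  | comm j hj =>
    have h := hf.comm (j - 1)
    rw [sub_add_cancel, tildeWeight, if_neg hj, one_smul] at h
    rw [map_sub, map_sub, map_smul, map_zero, sub_sub, sub_eq_zero, h, tildeScalar]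
  | comm0 =>
    have h := hf.comm (-1)
    rw [neg_add_cancel, tildeWeight, if_pos rfl] at h
    rw [map_sub, map_sub, map_smul, map_smul, map_zero, sub_sub, sub_eq_zero, h]
    simp [tildeScalar]

theorem socAlg_tilde_eq_top (h : t * b2 ≠ 0) : socAlg (Tilde K m b1 b2 t) = ⊤ :=
  (deformedRelations_tilde b1 b2 t).socAlg_eq_top (RingQuot.mkAlgHom_surjective K _)
    (tildeScalar_ne_zero h)

theorem deformedRelations_edgeRepPi_compl :
    DeformedRelations (edgeRepPi ({0, -1}ᶜ : Set (ZMod m)) (tildeScalar b2 t)) (tildeWeight b1 t)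
      (tildeScalar b2 t) := by
  refine .pi fun ⟨k, hk⟩ => ?_
  obtain ⟨hk0, hk1⟩ : k ≠ 0 ∧ k ≠ -1 := by simpa using hk
  refine deformedRelations_edgeRep ?_ ?_
  · rw [tildeWeight, if_neg hk0, one_mul]
  · rw [tildeScalar_add_one b2 t (mt eq_neg_of_add_eq_zero_left hk1), neg_neg]

theorem le_rank_tilde (b1 : K) (h : t * b2 ≠ 0) :
    ((4 * (m - 2) : ℕ) : Cardinal) ≤ Module.rank K (Tilde K m b1 b2 t) := by
  classical
  let s : Set (ZMod m) := {0, -1}ᶜ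
  let Φ : Tilde K m b1 b2 t →ₐ[K] (s → Matrix (Fin 2) (Fin 2) K) :=
    RingQuot.liftAlgHom K ⟨edgeRepPi s (tildeScalar b2 t),
      tildeRel_map_eq deformedRelations_edgeRepPi_compl⟩
  have hΦ : Function.Surjective Φ := by
    refine .of_comp (g := RingQuot.mkAlgHom K (TildeRel K m b1 b2 t)) ?_
    convert edgeRepPi_surjective (s := s) fun k _ => tildeScalar_ne_zero h k using 1
    ext p
    simp [Φ]
  have hcard : m - 2 ≤ Fintype.card s := by
    rw [Fintype.card_compl_set, ZMod.card]
    refine Nat.sub_le_sub_left ?_ m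
    rw [← Set.toFinset_card]
    simpa using Finset.card_le_two
  have hfinrank : Module.finrank K (s → Matrix (Fin 2) (Fin 2) K) = 4 * Fintype.card s := by
    simp [Module.finrank_pi_fintype, Module.finrank_matrix, mul_comm]
  calc ((4 * (m - 2) : ℕ) : Cardinal) ≤ Module.finrank K (s → Matrix (Fin 2) (Fin 2) K) := by
        rw [hfinrank]
        exact_mod_cast Nat.mul_le_mul_left 4 hcard
    _ = Module.rank K (s → Matrix (Fin 2) (Fin 2) K) := Module.finrank_eq_rank _ _
    _ ≤ Module.rank K (Tilde K m b1 b2 t) := Φ.toLinearMap.rank_le_of_surjective hΦ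

end Tilde

theorem tilde_not_socle_deformation_of_b2_ne_zero_general
    (K : Type) [Field K] (m : ℕ) [NeZero m] (b1 b2 t : K) (h : t * b2 ≠ 0) (q : ZMod m → K) :
    ((4 * (m - 2) : ℕ) : Cardinal) ≤
        Module.rank K ↥(Submodule.restrictScalars K (socAlg (Tilde K m b1 b2 t))) ∧
    ¬ Nonempty (socQuot K (Tilde K m b1 b2 t) ≃ₐ[K] socQuot K (Lam K m q)) := by
  have htop : socAlg (Tilde K m b1 b2 t) = ⊤ := socAlg_tilde_eq_top h
  constructor
  · rw [htop, Submodule.restrictScalars_top, rank_top]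
    exact le_rank_tilde b1 h
  · rintro ⟨e⟩
    have := subsingleton_socQuot_of_socAlg_eq_top (K := K) htop
    have := nontrivial_socQuot_lam q
    exact not_subsingleton _ e.symm.toEquiv.subsingleton

/-- for `m ≥ 4` and `t b₂ ≠ 0`, the socle of `Λ̃` has `K`-dimension at least
`2m`, and `Λ̃/soc(Λ̃)` is not isomorphic to `Λ/soc(Λ)` as a `K`-algebra, so `Λ̃` is not a
socle deformation of `Λ`. -/
theorem tilde_not_socle_deformation_of_b2_ne_zero
    (K : Type) [Field K] (m : ℕ) [NeZero m] (hm : 4 ≤ m)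
    (b1 b2 t : K) (h : t * b2 ≠ 0) :
    (2 * m : Cardinal) ≤
        Module.rank K ↥(Submodule.restrictScalars K (socAlg (Tilde K m b1 b2 t))) ∧
    ¬ Nonempty (socQuot K (Tilde K m b1 b2 t) ≃ₐ[K] socQuot K (Lam K m (fun _ => 1))) := by
  have hdim : 2 * m ≤ 4 * (m - 2) := by omega
  have ⟨hrank, hiso⟩ := tilde_not_socle_deformation_of_b2_ne_zero_general K m b1 b2 t h fun _ => 1
  exact ⟨le_trans (mod_cast hdim) hrank, hiso⟩
end
end

section
/- For every q = (q_0,…,q_{m−1}) ∈ (K*)^m, the socle of Λ_q equals the K-span of {a_0 ā_0, …, a_{m−1} ā_{m−1}}, and there is a K-algebra isomorphism Λ_q/soc(Λ_q) ≅ Λ/soc(Λ); that is, Λ_q is a socle deformation of Λ. -/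
open scoped BigOperators

noncomputable section

/-!
Since `a_j Λ_q a_j = 0` and `ā_j Λ_q ā_j = 0`, no simple left ideal `S` contains a `y` with
`a_j y ≠ 0`: it would satisfy `y = r a_j y`, whence `a_j y = a_j r a_j y = 0`. So all arrows
annihilate the socle from the left. As `Λ_q` is spanned by the `e_i`, `a_i`, `ā_i` and `a_i ā_i`,
and all `a_i ā_i` are nonzero (they act nontrivially on a four-dimensional module), an element
killed by all arrows is a combination of the `a_i ā_i`. Conversely each `a_i ā_i` spans a
one-dimensional left ideal. Modulo the `a_i ā_i` the defining relations no longer involve `q`.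
-/

section Algebra

theorem mul_eq_zero_of_orthogonalIdempotents {R ι : Type*} [Semiring R] {e : ι → R}
    (he : OrthogonalIdempotents e) {i j : ι} (hij : i ≠ j) {x y : R} (hx : x * e i = x)
    (hy : e j * y = y) : x * y = 0 := by
  rw [← hx, ← hy, mul_assoc, ← mul_assoc (e i), he.ortho hij, zero_mul, mul_zero]

theorem diagonal_mul_single {R n : Type*} [NonUnitalNonAssocSemiring R] [Fintype n] [DecidableEq n]
    (d : n → R) (i j : n) (c : R) :
    Matrix.diagonal d * Matrix.single i j c = Matrix.single i j (d i * c) := by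
  ext k l
  simp +contextual [Matrix.diagonal_mul, Matrix.single_apply]

theorem single_mul_diagonal {R n : Type*} [NonUnitalNonAssocSemiring R] [Fintype n] [DecidableEq n]
    (d : n → R) (i j : n) (c : R) :
    Matrix.single i j c * Matrix.diagonal d = Matrix.single i j (c * d j) := by
  ext k l
  simp +contextual [Matrix.mul_diagonal, Matrix.single_apply]

theorem span_eq_top_of_adjoin_eq_top {K R : Type*} [CommSemiring K] [Semiring R] [Algebra K R]
    {s t : Set R} (hs : Algebra.adjoin K s = ⊤) (one_mem : 1 ∈ Submodule.span K t)
    (mul_mem : ∀ x ∈ s, ∀ y ∈ t, x * y ∈ Submodule.span K t) : Submodule.span K t = ⊤ := by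
  have left_stable (x : R) : Submodule.span K t ≤ (Submodule.span K t).comap (.mulLeft K x) := by
    have hx : x ∈ Algebra.adjoin K s := hs ▸ Algebra.mem_top
    induction hx using Algebra.adjoin_induction with
    | mem x hx => exact Submodule.span_le.2 (mul_mem x hx)
    | algebraMap c =>
      intro y hy
      simpa [← Algebra.smul_def] using Submodule.smul_mem _ c hy
    | add x x' _ _ hx hx' =>
      intro y hy
      simpa [add_mul] using (Submodule.span K t).add_mem (hx hy) (hx' hy)
    | mul x x' _ _ hx hx' =>
      intro y hy
      simpa [mul_assoc] using hx (hx' hy)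
  refine eq_top_iff.2 fun x _ => ?_
  simpa using left_stable x one_mem

theorem smul_eq_zero_of_mem_isAtom {R M : Type*} [Semiring R] [AddCommMonoid M] [Module R M]
    {S : Submodule R M} (hS : IsAtom S) {x : R} (hx : ∀ r, x * r * x = 0)
    {y : M} (hy : y ∈ S) : x • y = 0 := by
  by_contra hxy
  have span_eq : Submodule.span R {x • y} = S :=
    (hS.le_iff.1 ((Submodule.span_singleton_le_iff_mem _ _).2 (S.smul_mem x hy))).resolve_left
      fun h => hxy (Submodule.span_singleton_eq_bot.1 h)
  obtain ⟨r, hr⟩ := Submodule.mem_span_singleton.1 (span_eq ▸ hy)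
  refine hxy ?_
  calc x • y = x • r • x • y := by rw [hr]
    _ = 0 := by rw [smul_smul, smul_smul, hx, zero_smul]

theorem isAtom_span_singleton_of_smul_eq_smul {K R M : Type*} [Field K] [Ring R] [Algebra K R]
    [AddCommGroup M] [Module K M] [Module R M] [IsScalarTower K R M] {x : M}
    (hx0 : x ≠ 0) (hx : ∀ r : R, ∃ c : K, r • x = c • x) :
    IsAtom (Submodule.span R {x}) := by
  rw [← isSimpleModule_iff_isAtom, isSimpleModule_iff]
  refine is_simple_module_of_finrank_eq_one (K := K) (finrank_eq_one
    ⟨x, Submodule.mem_span_singleton_self x⟩ (by simpa using hx0) ?_)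
  rintro ⟨y, hy⟩
  obtain ⟨r, rfl⟩ := Submodule.mem_span_singleton.1 hy
  obtain ⟨c, hc⟩ := hx r
  exact ⟨c, Subtype.ext hc.symm⟩

end Algebra

section Socle

variable {K : Type} [Field K] {R : Type} [Ring R] [Algebra K R]

theorem mul_eq_zero_of_mem_socAlg {x y : R} (hx : ∀ r, x * r * x = 0) (hy : y ∈ socAlg R) :
    x * y = 0 := by
  rw [socAlg, sSup_eq_iSup'] at hy
  induction hy using Submodule.iSup_induction' with
  | mem S y hy => exact smul_eq_zero_of_mem_isAtom S.2 hx hy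
  | zero => exact mul_zero x
  | add y y' _ _ hy hy' => rw [mul_add, hy, hy', add_zero]

theorem mem_socAlg_of_mul_eq_smul {x : R} (hx : ∀ r, ∃ c : K, r * x = c • x) : x ∈ socAlg R := by
  rcases eq_or_ne x 0 with rfl | hx0
  · exact zero_mem _
  · have hle : Submodule.span R {x} ≤ socAlg R :=
      le_sSup (isAtom_span_singleton_of_smul_eq_smul (K := K) hx0 hx)
    exact hle (Submodule.mem_span_singleton_self x)

variable (K R) in
/-- The projection of an algebra onto its quotient by the left socle. -/
def socQuotMk : R →ₐ[K] socQuot K R :=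
  RingQuot.mkAlgHom K fun x y : R => x - y ∈ socAlg R

theorem socQuotMk_eq_zero {x : R} (hx : x ∈ socAlg R) : socQuotMk K R x = 0 := by
  have hrel : x - 0 ∈ socAlg R := by rwa [sub_zero]
  rw [← map_zero (socQuotMk K R)]
  exact RingQuot.mkAlgHom_rel K hrel

/-- The universal property of the quotient by the left socle. -/
def socQuotLift {B : Type*} [Ring B] [Algebra K B] (f : R →ₐ[K] B)
    (hf : ∀ x ∈ socAlg R, f x = 0) : socQuot K R →ₐ[K] B :=
  RingQuot.liftAlgHom K ⟨f, fun x y hxy => sub_eq_zero.1 (by rw [← map_sub, hf _ hxy])⟩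

end Socle

section Families

variable {K : Type} [Field K] {m : ℕ} [NeZero m]

/-- A representation of the quiver `Q` in a ring: elements `e i`, `a i`, `b i` satisfying the
relations of the trivial paths and of the arrows `a_i` and `ā_i` of the path algebra. -/
structure IsPathFamily {R : Type*} [Ring R] (e a b : ZMod m → R) : Prop where
  idempotents : CompleteOrthogonalIdempotents e
  e_mul_a_self : ∀ i, e i * a i = a i
  a_mul_e_succ : ∀ i, a i * e (i + 1) = a i
  e_succ_mul_b : ∀ i, e (i + 1) * b i = b i
  b_mul_e_self : ∀ i, b i * e i = b i

/-- A family in an algebra satisfying the defining relations of `Λ_q`, the last two of them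
shifted so that no subtraction of indices occurs. -/
structure IsLamFamily {R : Type*} [Ring R] [Algebra K R] (q : ZMod m → K)
    (e a b : ZMod m → R) : Prop extends IsPathFamily e a b where
  a_mul_a_succ : ∀ i, a i * a (i + 1) = 0
  b_succ_mul_b : ∀ i, b (i + 1) * b i = 0
  b_mul_a_self : ∀ i, b i * a i = q (i + 1) • (a (i + 1) * b (i + 1))

namespace IsPathFamily

variable {R : Type*} [Ring R] [Algebra K R] {e a b : ZMod m → R}

/-- The universal property of the path algebra. -/
def lift (h : IsPathFamily e a b) : PathAlg K m →ₐ[K] R :=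
  RingQuot.liftAlgHom K ⟨FreeAlgebra.lift K (Gen.rec e a b), fun x y hxy => by
    cases hxy with
    | orth i j hij => simpa [Ee] using h.idempotents.ortho hij
    | idem i => simpa [Ee] using (h.idempotents.idem i).eq
    | total => simpa [Ee] using h.idempotents.complete
    | asrc i => simpa [Ee, Aa] using h.e_mul_a_self i
    | atgt i => simpa [Ee, Aa] using h.a_mul_e_succ i
    | bsrc i => simpa [Ee, Bb] using h.e_succ_mul_b i
    | btgt i => simpa [Ee, Bb] using h.b_mul_e_self i⟩

theorem lift_pe (h : IsPathFamily e a b) (i : ZMod m) : h.lift (pe K m i) = e i := by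
  simp [lift, pe, Ee]

theorem lift_pa (h : IsPathFamily e a b) (i : ZMod m) : h.lift (pa K m i) = a i := by
  simp [lift, pa, Aa]

theorem lift_pb (h : IsPathFamily e a b) (i : ZMod m) : h.lift (pb K m i) = b i := by
  simp [lift, pb, Bb]

end IsPathFamily

namespace IsLamFamily

section Lift

variable {R : Type*} [Ring R] [Algebra K R] {q : ZMod m → K} {e a b : ZMod m → R}

/-- The universal property of `Λ_q`. -/
def lift (h : IsLamFamily q e a b) : Lam K m q →ₐ[K] R :=
  RingQuot.liftAlgHom K ⟨h.toIsPathFamily.lift, fun x y hxy => by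
    cases hxy with
    | row i => simpa [IsPathFamily.lift_pa] using h.a_mul_a_succ i
    | col i =>
      have hi := h.b_succ_mul_b (i - 2)
      rw [show i - 2 + 1 = i - 1 by ring] at hi
      simpa [IsPathFamily.lift_pb] using hi
    | comm i =>
      have hi := h.b_mul_a_self (i - 1)
      rw [sub_add_cancel] at hi
      simp [IsPathFamily.lift_pa, IsPathFamily.lift_pb, hi]⟩

theorem lift_lamE (h : IsLamFamily q e a b) (i : ZMod m) : h.lift (lamE K m q i) = e i := by
  simp [lift, lamE, IsPathFamily.lift_pe]

theorem lift_lamA (h : IsLamFamily q e a b) (i : ZMod m) : h.lift (lamA K m q i) = a i := by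
  simp [lift, lamA, IsPathFamily.lift_pa]

theorem lift_lamB (h : IsLamFamily q e a b) (i : ZMod m) : h.lift (lamB K m q i) = b i := by
  simp [lift, lamB, IsPathFamily.lift_pb]

theorem map (h : IsLamFamily q e a b) {R' : Type*} [Ring R'] [Algebra K R'] (f : R →ₐ[K] R') :
    IsLamFamily q (f ∘ e) (f ∘ a) (f ∘ b) where
  idempotents := h.idempotents.map f.toRingHom
  e_mul_a_self i := by simp [← map_mul, h.e_mul_a_self]
  a_mul_e_succ i := by simp [← map_mul, h.a_mul_e_succ]
  e_succ_mul_b i := by simp [← map_mul, h.e_succ_mul_b]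
  b_mul_e_self i := by simp [← map_mul, h.b_mul_e_self]
  a_mul_a_succ i := by simp [← map_mul, h.a_mul_a_succ]
  b_succ_mul_b i := by simp [← map_mul, h.b_succ_mul_b]
  b_mul_a_self i := by simp [← map_mul, h.b_mul_a_self]

theorem of_a_mul_b_eq_zero (h : IsLamFamily q e a b) (hab : ∀ i, a i * b i = 0)
    (p : ZMod m → K) : IsLamFamily p e a b where
  toIsPathFamily := h.toIsPathFamily
  a_mul_a_succ := h.a_mul_a_succ
  b_succ_mul_b := h.b_succ_mul_b
  b_mul_a_self i := by rw [h.b_mul_a_self, hab, smul_zero, smul_zero]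

end Lift

section MultiplicationTable

variable {R : Type*} [Ring R] [Algebra K R] {q : ZMod m → K} {e a b : ZMod m → R}

-- The element `a_i ā_i` is written `(a * b) i`, so that these equations can be used as
-- terminating rewrite rules.

theorem e_mul_e (h : IsLamFamily q e a b) (j i : ZMod m) :
    e j * e i = if j = i then e j else 0 :=
  h.idempotents.mul_eq j i

theorem e_mul_a (h : IsLamFamily q e a b) (j i : ZMod m) :
    e j * a i = if j = i then a j else 0 := by
  split_ifs with hji
  · rw [← hji, h.e_mul_a_self]
  · exact mul_eq_zero_of_orthogonalIdempotents h.idempotents.toOrthogonalIdempotents hji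
      (h.idempotents.idem j) (h.e_mul_a_self i)

theorem e_mul_b (h : IsLamFamily q e a b) (j i : ZMod m) :
    e j * b i = if j = i + 1 then b i else 0 := by
  split_ifs with hji
  · rw [hji, h.e_succ_mul_b]
  · exact mul_eq_zero_of_orthogonalIdempotents h.idempotents.toOrthogonalIdempotents hji
      (h.idempotents.idem j) (h.e_succ_mul_b i)

theorem e_mul_ab (h : IsLamFamily q e a b) (j i : ZMod m) :
    e j * (a * b) i = if j = i then (a * b) j else 0 := by
  rw [Pi.mul_apply, ← mul_assoc, h.e_mul_a]
  split_ifs with hji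
  · rw [← hji, Pi.mul_apply]
  · exact zero_mul _

theorem a_mul_e (h : IsLamFamily q e a b) (j i : ZMod m) :
    a j * e i = if j + 1 = i then a j else 0 := by
  split_ifs with hji
  · rw [← hji, h.a_mul_e_succ]
  · exact mul_eq_zero_of_orthogonalIdempotents h.idempotents.toOrthogonalIdempotents hji
      (h.a_mul_e_succ j) (h.idempotents.idem i)

theorem a_mul_a (h : IsLamFamily q e a b) (j i : ZMod m) : a j * a i = 0 := by
  by_cases hji : j + 1 = i
  · rw [← hji, h.a_mul_a_succ]
  · exact mul_eq_zero_of_orthogonalIdempotents h.idempotents.toOrthogonalIdempotents hji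
      (h.a_mul_e_succ j) (h.e_mul_a_self i)

theorem a_mul_b (h : IsLamFamily q e a b) (j i : ZMod m) :
    a j * b i = if j = i then (a * b) j else 0 := by
  split_ifs with hji
  · rw [← hji, Pi.mul_apply]
  · exact mul_eq_zero_of_orthogonalIdempotents h.idempotents.toOrthogonalIdempotents
      ((add_left_injective 1).ne hji) (h.a_mul_e_succ j) (h.e_succ_mul_b i)

theorem a_mul_ab (h : IsLamFamily q e a b) (j i : ZMod m) : a j * (a * b) i = 0 := by
  rw [Pi.mul_apply, ← mul_assoc, h.a_mul_a, zero_mul]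

theorem b_mul_e (h : IsLamFamily q e a b) (j i : ZMod m) :
    b j * e i = if j = i then b j else 0 := by
  split_ifs with hji
  · rw [← hji, h.b_mul_e_self]
  · exact mul_eq_zero_of_orthogonalIdempotents h.idempotents.toOrthogonalIdempotents hji
      (h.b_mul_e_self j) (h.idempotents.idem i)

theorem b_mul_a (h : IsLamFamily q e a b) (j i : ZMod m) :
    b j * a i = if j = i then q (j + 1) • (a * b) (j + 1) else 0 := by
  split_ifs with hji
  · rw [← hji, h.b_mul_a_self, Pi.mul_apply]
  · exact mul_eq_zero_of_orthogonalIdempotents h.idempotents.toOrthogonalIdempotents hji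
      (h.b_mul_e_self j) (h.e_mul_a_self i)

theorem b_mul_b (h : IsLamFamily q e a b) (j i : ZMod m) : b j * b i = 0 := by
  by_cases hji : j = i + 1
  · rw [hji, h.b_succ_mul_b]
  · exact mul_eq_zero_of_orthogonalIdempotents h.idempotents.toOrthogonalIdempotents hji
      (h.b_mul_e_self j) (h.e_succ_mul_b i)

theorem ab_mul_b (h : IsLamFamily q e a b) (i j : ZMod m) : (a * b) i * b j = 0 := by
  rw [Pi.mul_apply, mul_assoc, h.b_mul_b, mul_zero]

theorem ab_mul_a (h : IsLamFamily q e a b) (i j : ZMod m) : (a * b) i * a j = 0 := by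
  rw [Pi.mul_apply, mul_assoc, h.b_mul_a, mul_ite, mul_smul_comm, h.a_mul_ab, smul_zero, mul_zero,
    ite_self]

theorem ab_mul_ab (h : IsLamFamily q e a b) (i j : ZMod m) : (a * b) i * (a * b) j = 0 := by
  rw [Pi.mul_apply a b j, ← mul_assoc, h.ab_mul_a, zero_mul]

theorem b_mul_ab (h : IsLamFamily q e a b) (j i : ZMod m) : b j * (a * b) i = 0 := by
  rw [Pi.mul_apply, ← mul_assoc, h.b_mul_a, ite_mul, smul_mul_assoc, h.ab_mul_b, smul_zero,
    zero_mul, ite_self]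

end MultiplicationTable

section Coordinates

variable {R : Type*} [Ring R] [Algebra K R] {q : ZMod m → K} {e a b : ZMod m → R}

theorem span_eq_top (h : IsLamFamily q e a b)
    (hgen : Algebra.adjoin K (Set.range e ∪ Set.range a ∪ Set.range b) = ⊤) :
    Submodule.span K (Set.range e ∪ Set.range a ∪ Set.range b ∪ Set.range (a * b)) = ⊤ := by
  set T := Set.range e ∪ Set.range a ∪ Set.range b ∪ Set.range (a * b)
  have e_mem (i) : e i ∈ Submodule.span K T := Submodule.subset_span (by simp [T])
  have a_mem (i) : a i ∈ Submodule.span K T := Submodule.subset_span (by simp [T])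
  have b_mem (i) : b i ∈ Submodule.span K T := Submodule.subset_span (by simp [T])
  have ab_mem (i) : (a * b) i ∈ Submodule.span K T :=
    Submodule.subset_span (.inr (Set.mem_range_self i))
  refine span_eq_top_of_adjoin_eq_top hgen ?_ ?_
  · rw [← h.idempotents.complete]
    exact sum_mem fun i _ => e_mem i
  · rintro _ ((⟨j, rfl⟩ | ⟨j, rfl⟩) | ⟨j, rfl⟩)
      _ (((⟨i, rfl⟩ | ⟨i, rfl⟩) | ⟨i, rfl⟩) | ⟨i, rfl⟩) <;>
      simp only [h.e_mul_e, h.e_mul_a, h.e_mul_b, h.e_mul_ab, h.a_mul_e, h.a_mul_a, h.a_mul_b,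
        h.a_mul_ab, h.b_mul_e, h.b_mul_a, h.b_mul_b, h.b_mul_ab] <;>
      (try split_ifs) <;>
      simp only [e_mem, a_mem, b_mem, ab_mem, zero_mem, Submodule.smul_mem]

theorem exists_eq_sum (h : IsLamFamily q e a b)
    (hgen : Algebra.adjoin K (Set.range e ∪ Set.range a ∪ Set.range b) = ⊤) (x : R) :
    ∃ α β γ ζ : ZMod m → K, x = ∑ i, α i • e i + ∑ i, β i • a i + ∑ i, γ i • b i +
      ∑ i, ζ i • (a * b) i := by
  have hx : x ∈ Submodule.span K (Set.range e ∪ Set.range a ∪ Set.range b ∪ Set.range (a * b)) :=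
    h.span_eq_top hgen ▸ Submodule.mem_top
  simp only [Submodule.span_union, Submodule.mem_sup, Submodule.mem_span_range_iff_exists_fun]
    at hx
  obtain ⟨_, ⟨_, ⟨_, ⟨α, rfl⟩, _, ⟨β, rfl⟩, rfl⟩, _, ⟨γ, rfl⟩, rfl⟩, _, ⟨ζ, rfl⟩, rfl⟩ := hx
  exact ⟨α, β, γ, ζ, rfl⟩

theorem a_mul_sum (h : IsLamFamily q e a b) (j : ZMod m) (α β γ ζ : ZMod m → K) :
    a j * (∑ i, α i • e i + ∑ i, β i • a i + ∑ i, γ i • b i + ∑ i, ζ i • (a * b) i) =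
      α (j + 1) • a j + γ j • (a * b) j := by
  simp [mul_add, Finset.mul_sum, -Pi.mul_apply, h.a_mul_e, h.a_mul_a, h.a_mul_b, h.a_mul_ab]

theorem b_mul_sum (h : IsLamFamily q e a b) (j : ZMod m) (α β γ ζ : ZMod m → K) :
    b j * (∑ i, α i • e i + ∑ i, β i • a i + ∑ i, γ i • b i + ∑ i, ζ i • (a * b) i) =
      α j • b j + (β j * q (j + 1)) • (a * b) (j + 1) := by
  simp [mul_add, Finset.mul_sum, -Pi.mul_apply, h.b_mul_e, h.b_mul_a, h.b_mul_b, h.b_mul_ab,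
    smul_smul]

theorem sum_mul_ab (h : IsLamFamily q e a b) (j : ZMod m) (α β γ ζ : ZMod m → K) :
    (∑ i, α i • e i + ∑ i, β i • a i + ∑ i, γ i • b i + ∑ i, ζ i • (a * b) i) * (a * b) j =
      α j • (a * b) j := by
  simp [add_mul, Finset.sum_mul, -Pi.mul_apply, h.e_mul_ab, h.a_mul_ab, h.b_mul_ab, h.ab_mul_ab]

theorem a_mul_mul_a (h : IsLamFamily q e a b)
    (hgen : Algebra.adjoin K (Set.range e ∪ Set.range a ∪ Set.range b) = ⊤) (j : ZMod m) (r : R) :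
    a j * r * a j = 0 := by
  obtain ⟨α, β, γ, ζ, rfl⟩ := h.exists_eq_sum hgen r
  rw [h.a_mul_sum, add_mul, smul_mul_assoc, smul_mul_assoc, h.a_mul_a, h.ab_mul_a, smul_zero,
    smul_zero, add_zero]

theorem b_mul_mul_b (h : IsLamFamily q e a b)
    (hgen : Algebra.adjoin K (Set.range e ∪ Set.range a ∪ Set.range b) = ⊤) (j : ZMod m) (r : R) :
    b j * r * b j = 0 := by
  obtain ⟨α, β, γ, ζ, rfl⟩ := h.exists_eq_sum hgen r
  rw [h.b_mul_sum, add_mul, smul_mul_assoc, smul_mul_assoc, h.b_mul_b, h.ab_mul_b, smul_zero,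
    smul_zero, add_zero]

theorem mem_span_ab_of_arrows_mul_eq_zero (h : IsLamFamily q e a b)
    (hgen : Algebra.adjoin K (Set.range e ∪ Set.range a ∪ Set.range b) = ⊤)
    (hq : ∀ i, q i ≠ 0) (hab : ∀ i, (a * b) i ≠ 0) {y : R}
    (hay : ∀ j, a j * y = 0) (hby : ∀ j, b j * y = 0) :
    y ∈ Submodule.span K (Set.range (a * b)) := by
  obtain ⟨α, β, γ, ζ, rfl⟩ := h.exists_eq_sum hgen y
  simp only [h.a_mul_sum] at hay
  simp only [h.b_mul_sum] at hby
  -- Multiplying `b j * y = 0` by `a j` on the right isolates `α j`.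
  have hα (j) : α j = 0 := by
    have hbya := congrArg (· * a j) (hby j)
    simpa only [add_mul, smul_mul_assoc, h.b_mul_a, if_true, h.ab_mul_a, smul_zero, add_zero,
      zero_mul, smul_eq_zero, hq, hab, or_false] using hbya
  have hβ (j) : β j = 0 := by
    simpa only [hα, zero_smul, zero_add, smul_eq_zero, mul_eq_zero, hq, hab, or_false]
      using hby j
  have hγ (j) : γ j = 0 := by
    simpa only [hα, zero_smul, zero_add, smul_eq_zero, hab, or_false] using hay j
  simp only [hα, hβ, hγ, zero_smul, Finset.sum_const_zero, zero_add]
  exact sum_mem fun i _ => Submodule.smul_mem _ _ (Submodule.subset_span ⟨i, rfl⟩)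

end Coordinates

section Socle

variable {R : Type} [Ring R] [Algebra K R] {q : ZMod m → K} {e a b : ZMod m → R}

theorem ab_mem_socAlg (h : IsLamFamily q e a b)
    (hgen : Algebra.adjoin K (Set.range e ∪ Set.range a ∪ Set.range b) = ⊤) (i : ZMod m) :
    (a * b) i ∈ socAlg R := by
  refine mem_socAlg_of_mul_eq_smul (K := K) fun r => ?_
  obtain ⟨α, β, γ, ζ, rfl⟩ := h.exists_eq_sum hgen r
  exact ⟨α i, h.sum_mul_ab i α β γ ζ⟩

theorem restrictScalars_socAlg_eq_span (h : IsLamFamily q e a b)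
    (hgen : Algebra.adjoin K (Set.range e ∪ Set.range a ∪ Set.range b) = ⊤)
    (hq : ∀ i, q i ≠ 0) (hab : ∀ i, (a * b) i ≠ 0) :
    (socAlg R).restrictScalars K = Submodule.span K (Set.range (a * b)) := by
  refine le_antisymm (fun y hy => ?_) (Submodule.span_le.2 ?_)
  · exact h.mem_span_ab_of_arrows_mul_eq_zero hgen hq hab
      (fun j => mul_eq_zero_of_mem_socAlg (h.a_mul_mul_a hgen j) hy)
      (fun j => mul_eq_zero_of_mem_socAlg (h.b_mul_mul_b hgen j) hy)
  · rintro _ ⟨i, rfl⟩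
    exact h.ab_mem_socAlg hgen i

end Socle

end IsLamFamily

end Families

section ProjectiveModule

variable {K : Type} [Field K] {m : ℕ}

variable (K) in
/-- The action of `e_i` on the projective left module `Λ_q e_j` in the basis
`e_j, a_{j-1}, ā_j, a_j ā_j`, whose members are paths starting at `j, j-1, j+1, j`. -/
def projE (j i : ZMod m) : Matrix (Fin 4) (Fin 4) K :=
  Matrix.diagonal fun k => if i = ![j, j - 1, j + 1, j] k then 1 else 0

variable (K) in
/-- The action of `a_i` on `Λ_q e_j` in the basis `e_j, a_{j-1}, ā_j, a_j ā_j`. -/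
def projA (j i : ZMod m) : Matrix (Fin 4) (Fin 4) K :=
  Matrix.single 1 0 (if i = j - 1 then 1 else 0) + Matrix.single 3 2 (if i = j then 1 else 0)

/-- The action of `ā_i` on `Λ_q e_j` in the basis `e_j, a_{j-1}, ā_j, a_j ā_j`. -/
def projB (q : ZMod m → K) (j i : ZMod m) : Matrix (Fin 4) (Fin 4) K :=
  Matrix.single 2 0 (if i = j then 1 else 0) + Matrix.single 3 1 (if i = j - 1 then q j else 0)

theorem completeOrthogonalIdempotents_projE [NeZero m] (j : ZMod m) :
    CompleteOrthogonalIdempotents (projE K j) := by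
  refine CompleteOrthogonalIdempotents.iff_ortho_complete.2 ⟨fun i i' hii' => ?_, ?_⟩
  · simp only [projE]
    rw [Matrix.diagonal_mul_diagonal, Matrix.diagonal_eq_zero]
    funext k
    rw [Pi.zero_apply, ite_zero_mul_ite_zero, if_neg fun hk => hii' (hk.1.trans hk.2.symm)]
  · ext k l
    simp [projE, Matrix.sum_apply, Matrix.diagonal_apply, Matrix.one_apply]

theorem isLamFamily_proj [NeZero m] (q : ZMod m → K) (j : ZMod m) :
    IsLamFamily q (projE K j) (projA K j) (projB q j) where
  idempotents := completeOrthogonalIdempotents_projE j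
  e_mul_a_self i := by
    simp only [projE, projA, mul_add, diagonal_mul_single]
    congr 2 <;> split_ifs <;> simp_all
  a_mul_e_succ i := by
    simp only [projE, projA, add_mul, single_mul_diagonal]
    congr 2 <;> split_ifs <;> simp_all
  e_succ_mul_b i := by
    simp only [projE, projB, mul_add, diagonal_mul_single]
    congr 2 <;> split_ifs <;> simp_all
  b_mul_e_self i := by
    simp only [projE, projB, add_mul, single_mul_diagonal]
    congr 2 <;> split_ifs <;> simp_all
  a_mul_a_succ i := by simp [projA, mul_add, add_mul]
  b_succ_mul_b i := by simp [projB, mul_add, add_mul]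
  b_mul_a_self i := by
    by_cases hi : i + 1 = j <;>
      simp [projA, projB, mul_add, add_mul, eq_sub_iff_add_eq, hi]

theorem projA_mul_projB_ne_zero (q : ZMod m → K) (j : ZMod m) :
    projA K j j * projB q j j ≠ 0 := by
  intro h
  simpa [projA, projB, mul_add, add_mul] using congrFun₂ h 3 0

end ProjectiveModule

section Lam

variable {K : Type} [Field K] {m : ℕ} [NeZero m]

theorem isLamFamily_lam (q : ZMod m → K) :
    IsLamFamily q (lamE K m q) (lamA K m q) (lamB K m q) := by
  have path_rel {x y : FA K m} (hxy : PathRel K m x y) :=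
    congrArg (RingQuot.mkAlgHom K (LamRel K m q)) (RingQuot.mkAlgHom_rel K hxy)
  have lam_rel {x y : PathAlg K m} (hxy : LamRel K m q x y) := RingQuot.mkAlgHom_rel K hxy
  exact
    { idempotents := CompleteOrthogonalIdempotents.iff_ortho_complete.2
        ⟨fun i j hij => by simpa using! path_rel (.orth i j hij), by simpa using! path_rel .total⟩
      e_mul_a_self := fun i => by simpa using! path_rel (.asrc i)
      a_mul_e_succ := fun i => by simpa using! path_rel (.atgt i)
      e_succ_mul_b := fun i => by simpa using! path_rel (.bsrc i)
      b_mul_e_self := fun i => by simpa using! path_rel (.btgt i)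
      a_mul_a_succ := fun i => by simpa using! lam_rel (.row i)
      b_succ_mul_b := fun i => by
        have col := lam_rel (.col (i + 2))
        rw [show i + 2 - 1 = i + 1 by ring, add_sub_cancel_right] at col
        simpa using! col
      b_mul_a_self := fun i => by
        have comm := lam_rel (.comm (i + 1))
        rw [add_sub_cancel_right, map_sub, map_zero, sub_eq_zero] at comm
        simpa using! comm.symm }

theorem adjoin_lam_eq_top (q : ZMod m → K) :
    Algebra.adjoin K (Set.range (lamE K m q) ∪ Set.range (lamA K m q) ∪ Set.range (lamB K m q)) =
      ⊤ := by
  let π := (RingQuot.mkAlgHom K (LamRel K m q)).comp (RingQuot.mkAlgHom K (PathRel K m))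
  have hπ : Function.Surjective π :=
    (RingQuot.mkAlgHom_surjective K _).comp (RingQuot.mkAlgHom_surjective K _)
  rw [eq_top_iff, ← (AlgHom.range_eq_top π).2 hπ, ← Algebra.map_top,
    ← FreeAlgebra.adjoin_range_ι, AlgHom.map_adjoin]
  refine Algebra.adjoin_mono ?_
  rintro _ ⟨_, ⟨i | i | i, rfl⟩, rfl⟩
  · exact .inl (.inl ⟨i, rfl⟩)
  · exact .inl (.inr ⟨i, rfl⟩)
  · exact .inr ⟨i, rfl⟩

theorem lamA_mul_lamB_ne_zero (q : ZMod m → K) (i : ZMod m) :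
    (lamA K m q * lamB K m q) i ≠ 0 := by
  intro h
  have hproj := isLamFamily_proj q i
  apply projA_mul_projB_ne_zero q i
  rw [← hproj.lift_lamA, ← hproj.lift_lamB, ← map_mul]
  exact (congrArg _ h).trans (map_zero _)

theorem restrictScalars_socAlg_lam {q : ZMod m → K} (hq : ∀ i, q i ≠ 0) :
    (socAlg (Lam K m q)).restrictScalars K =
      Submodule.span K (Set.range (lamA K m q * lamB K m q)) :=
  (isLamFamily_lam q).restrictScalars_socAlg_eq_span (adjoin_lam_eq_top q) hq
    (lamA_mul_lamB_ne_zero q)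

theorem socQuotMk_lamA_mul_lamB (q : ZMod m → K) (i : ZMod m) :
    socQuotMk K (Lam K m q) (lamA K m q i) * socQuotMk K (Lam K m q) (lamB K m q i) = 0 := by
  rw [← map_mul]
  exact socQuotMk_eq_zero ((isLamFamily_lam q).ab_mem_socAlg (adjoin_lam_eq_top q) i)

theorem isLamFamily_socQuotMk (q p : ZMod m → K) :
    IsLamFamily q (socQuotMk K (Lam K m p) ∘ lamE K m p) (socQuotMk K (Lam K m p) ∘ lamA K m p)
      (socQuotMk K (Lam K m p) ∘ lamB K m p) :=
  ((isLamFamily_lam p).map _).of_a_mul_b_eq_zero (socQuotMk_lamA_mul_lamB p) q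

theorem lift_socQuotMk_eq_zero {q : ZMod m → K} (hq : ∀ i, q i ≠ 0) (p : ZMod m → K)
    (x : Lam K m q) (hx : x ∈ socAlg (Lam K m q)) : (isLamFamily_socQuotMk q p).lift x = 0 := by
  have span_le_ker : Submodule.span K (Set.range (lamA K m q * lamB K m q)) ≤
      LinearMap.ker (isLamFamily_socQuotMk q p).lift.toLinearMap := by
    refine Submodule.span_le.2 ?_
    rintro _ ⟨i, rfl⟩
    change (isLamFamily_socQuotMk q p).lift (lamA K m q i * lamB K m q i) = 0
    rw [map_mul, IsLamFamily.lift_lamA, IsLamFamily.lift_lamB]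
    exact socQuotMk_lamA_mul_lamB p i
  exact span_le_ker (restrictScalars_socAlg_lam hq ▸ hx)

/-- The homomorphism `Λ_q / soc(Λ_q) → Λ_p / soc(Λ_p)` that sends generators to generators. -/
def socQuotComparison {q : ZMod m → K} (hq : ∀ i, q i ≠ 0) (p : ZMod m → K) :
    socQuot K (Lam K m q) →ₐ[K] socQuot K (Lam K m p) :=
  socQuotLift (isLamFamily_socQuotMk q p).lift (lift_socQuotMk_eq_zero hq p)

theorem socQuotComparison_comp_socQuotMk {q : ZMod m → K} (hq : ∀ i, q i ≠ 0) (p : ZMod m → K) :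
    (socQuotComparison hq p).comp (socQuotMk K (Lam K m q)) = (isLamFamily_socQuotMk q p).lift :=
  AlgHom.ext fun x =>
    RingQuot.liftAlgHom_mkAlgHom_apply K (isLamFamily_socQuotMk q p).lift _ x

theorem socQuotComparison_comp_lift {q p : ZMod m → K} (hp : ∀ i, p i ≠ 0) :
    (socQuotComparison hp q).comp (isLamFamily_socQuotMk q p).lift = socQuotMk K (Lam K m q) := by
  have hmk (x) := DFunLike.congr_fun (socQuotComparison_comp_socQuotMk hp q) x
  refine AlgHom.ext_of_adjoin_eq_top (adjoin_lam_eq_top q) ?_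
  rintro _ ((⟨i, rfl⟩ | ⟨i, rfl⟩) | ⟨i, rfl⟩)
  · rw [AlgHom.comp_apply, IsLamFamily.lift_lamE]
    exact (hmk _).trans (IsLamFamily.lift_lamE _ i)
  · rw [AlgHom.comp_apply, IsLamFamily.lift_lamA]
    exact (hmk _).trans (IsLamFamily.lift_lamA _ i)
  · rw [AlgHom.comp_apply, IsLamFamily.lift_lamB]
    exact (hmk _).trans (IsLamFamily.lift_lamB _ i)

theorem socQuotComparison_comp_socQuotComparison {q p : ZMod m → K} (hq : ∀ i, q i ≠ 0)
    (hp : ∀ i, p i ≠ 0) :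
    (socQuotComparison hp q).comp (socQuotComparison hq p) = AlgHom.id K _ := by
  apply RingQuot.ringQuot_ext'
  change (socQuotComparison hp q).comp ((socQuotComparison hq p).comp (socQuotMk K _)) =
    socQuotMk K _
  rw [socQuotComparison_comp_socQuotMk, socQuotComparison_comp_lift]

/-- The isomorphism `Λ_q / soc(Λ_q) ≅ Λ_p / soc(Λ_p)` that sends generators to generators. -/
def socQuotEquiv {q p : ZMod m → K} (hq : ∀ i, q i ≠ 0) (hp : ∀ i, p i ≠ 0) :
    socQuot K (Lam K m q) ≃ₐ[K] socQuot K (Lam K m p) :=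
  AlgEquiv.ofAlgHom (socQuotComparison hq p) (socQuotComparison hp q)
    (socQuotComparison_comp_socQuotComparison hp hq)
    (socQuotComparison_comp_socQuotComparison hq hp)

end Lam

/-- for every `q ∈ (K*)^m`, the socle of `Λ_q` is the `K`-span of the
elements `a_i ā_i`, and `Λ_q/soc(Λ_q) ≅ Λ/soc(Λ)` as `K`-algebras; that is, `Λ_q` is a
socle deformation of `Λ = Λ_{(1,…,1)}`. -/
theorem lam_q_socle_deformation
    (K : Type) [Field K] (m : ℕ) [NeZero m] (hm : 1 ≤ m)
    (q : ZMod m → K) (hq : ∀ i, q i ≠ 0) :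
    Submodule.restrictScalars K (socAlg (Lam K m q)) =
        Submodule.span K {x : Lam K m q | ∃ i : ZMod m, x = lamA K m q i * lamB K m q i} ∧
    Nonempty (socQuot K (Lam K m q) ≃ₐ[K] socQuot K (Lam K m (fun _ => 1))) := by
  refine ⟨?_, ⟨socQuotEquiv hq fun _ => one_ne_zero⟩⟩
  have range_eq : {x | ∃ i, x = lamA K m q i * lamB K m q i} =
      Set.range (lamA K m q * lamB K m q) :=
    Set.ext fun _ => exists_congr fun _ => eq_comm
  rw [range_eq, restrictScalars_socAlg_lam hq]
end
end
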